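/- Let Ω ⊂⊂ ℂ^m be a bounded domain with Lipschitz boundary, let F : Ω → ℂ^m be a holomorphic map, and let V ⊂ Ω be a nonempty open subset. Then F does not have a dense orbit in V; that is, there does not exist a sequence {p_n}_{n≥0} ⊂ Ω with F(p_n) = p_{n+1} for all n such that {p_n} ∩ V is dense in V. -/

import Mathlib

/-!
Suppose that an orbit `p` is dense in a ball about `p 0`. First, the iterates of `F` along the orbit
extend to holomorphic maps `G n` of the whole ball, with `G n (p j) = p (n + j)`. Inductively, one
extends `F ∘ g` for a holomorphic map `g` of the ball into `closure Ω`. At a point which `g` sends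
to the boundary, choose a direction `v` pointing into `Ω` and expand `F` in a Taylor series in the
direction `v` about `g x + t • v`, evaluated at `-t`. Since `Ω` contains sectors, the coefficients
decay like `(c * t) ^ (-n)`, and near points that `g` sends into `Ω` they decay faster. The three
balls theorem interpolates the two rates, and for small `t` the series converges uniformly.

Second, the `G n` are bounded, hence equicontinuous, so that the almost periods of the orbit have
gaps bounded by some `L`. At a time `n` which nearly maximizes `∑ l ≤ L, ‖p (n + l)‖ ^ 2`, the
maximum principle forces `x ↦ (G (n + l) x)` to be nearly constant for all `l ≤ L`. But for some
`l ≤ L` the time `n + l` is an almost period, so `G (n + l)` is close to the identity on the orbit,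
and the orbit points near `p 0` must all coincide with `p 0`.
-/

open Metric

/-- A bounded domain `Ω ⊆ ℂ^m` has Lipschitz boundary: near each boundary point, after a
unitary (holomorphic rotation) change of coordinates `A` and a translation `b`, `Ω` coincides
locally with the subgraph `{z : Im z_i < r z}` of a Lipschitz function `r` which does not
depend on the coordinate `Im z_i`. -/
def HasLipschitzBoundary {m : ℕ} (Ω : Set (EuclideanSpace ℂ (Fin m))) : Prop :=
  ∀ p ∈ frontier Ω,
    ∃ (A : EuclideanSpace ℂ (Fin m) ≃ₗᵢ[ℂ] EuclideanSpace ℂ (Fin m))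
      (b : EuclideanSpace ℂ (Fin m)) (C : NNReal)
      (r : EuclideanSpace ℂ (Fin m) → ℝ) (i : Fin m)
      (W : Set (EuclideanSpace ℂ (Fin m))),
      IsOpen W ∧ p ∈ W ∧ LipschitzWith C r ∧
      (∀ z w : EuclideanSpace ℂ (Fin m),
        (∀ j, j ≠ i → z j = w j) → (z i).re = (w i).re → r z = r w) ∧
      (∀ z ∈ W, z ∈ Ω ↔ ((A z + b) i).im < r (A z + b))

open Filter Topology

theorem exists_ball_forall_norm_le {X Y : Type*} [PseudoMetricSpace X] [SeminormedAddCommGroup Y]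
    {f : X → Y} {U : Set X} (hU : IsOpen U) (hf : ContinuousOn f U) {x₀ : X} (hx₀ : x₀ ∈ U) :
    ∃ R > 0, ∃ M, ball x₀ R ⊆ U ∧ ∀ x ∈ ball x₀ R, ‖f x‖ ≤ M := by
  have hbound : ∀ᶠ x in 𝓝 x₀, ‖f x‖ < ‖f x₀‖ + 1 :=
    (hf.continuousAt (hU.mem_nhds hx₀)).norm.eventually_lt_const (lt_add_one _)
  obtain ⟨R, hR, hball⟩ := Metric.eventually_nhds_iff_ball.1 (hbound.and (hU.mem_nhds hx₀))
  exact ⟨R, hR, ‖f x₀‖ + 1, fun x hx => (hball x hx).2, fun x hx => (hball x hx).1.le⟩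

section Holomorphic

variable {ι E F : Type*} [NormedAddCommGroup E] [NormedSpace ℂ E]
  [NormedAddCommGroup F] [NormedSpace ℂ F]

theorem norm_fderiv_le_of_forall_norm_le {f : E → F} {x : E} {r M : ℝ} (hr : 0 < r)
    (hf : DifferentiableOn ℂ f (ball x r)) (hM : ∀ y ∈ ball x r, ‖f y‖ ≤ M) :
    ‖fderiv ℂ f x‖ ≤ 2 * M / r := by
  refine Complex.norm_fderiv_le_div_of_mapsTo_ball hf (fun y hy => ?_) hr
  rw [mem_closedBall_iff_norm, two_mul]
  exact norm_sub_le_of_le (hM y hy) (hM x (mem_ball_self hr))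

theorem uniformCauchySeqOn_fderiv {l : Filter ι} {f : ι → E → F} {x₀ : E} {r : ℝ} (hr : 0 < r)
    (hf : ∀ᶠ n in l, DifferentiableOn ℂ (f n) (ball x₀ (2 * r)))
    (hcauchy : UniformCauchySeqOn f l (ball x₀ (2 * r))) :
    UniformCauchySeqOn (fun n => fderiv ℂ (f n)) l (ball x₀ r) := by
  intro u hu
  obtain ⟨ε, hε, hεu⟩ := mem_uniformity_dist.1 hu
  filter_upwards [hf.prod_mk hf, hcauchy _ (dist_mem_uniformity (show 0 < ε * r / 4 by positivity))]
    with ⟨m, n⟩ ⟨hm, hn⟩ hmn x hx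
  have hsub : ball x r ⊆ ball x₀ (2 * r) := ball_subset_ball' (by linarith [mem_ball.1 hx])
  have hat : ∀ k, DifferentiableOn ℂ (f k) (ball x₀ (2 * r)) → DifferentiableAt ℂ (f k) x :=
    fun k hk => hk.differentiableAt (isOpen_ball.mem_nhds (hsub (mem_ball_self hr)))
  refine hεu ?_
  rw [dist_eq_norm, ← fderiv_sub (hat m hm) (hat n hn)]
  calc ‖fderiv ℂ (f m - f n) x‖
      ≤ 2 * (ε * r / 4) / r :=
        norm_fderiv_le_of_forall_norm_le hr ((hm.sub hn).mono hsub) fun y hy => by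
          simpa only [Pi.sub_apply, ← dist_eq_norm] using (hmn y (hsub hy)).le
    _ < ε := by field_simp; linarith

theorem differentiableOn_of_tendstoUniformlyOn [CompleteSpace F] {l : Filter ι} [l.NeBot]
    {f : ι → E → F} {g : E → F} {U : Set E} (hU : IsOpen U) (hfg : TendstoUniformlyOn f g l U)
    (hf : ∀ᶠ n in l, DifferentiableOn ℂ (f n) U) : DifferentiableOn ℂ g U := by
  intro x₀ hx₀
  obtain ⟨R, hR, hRU⟩ := Metric.isOpen_iff.1 hU x₀ hx₀
  obtain ⟨r, hr, rfl⟩ : ∃ r, 0 < r ∧ 2 * r = R := ⟨R / 2, by positivity, by ring⟩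
  have hcauchy := uniformCauchySeqOn_fderiv hr (hf.mono fun _ hn => hn.mono hRU)
    (hfg.mono hRU).uniformCauchySeqOn
  have hpointwise : ∀ x ∈ ball x₀ r, ∃ y, Tendsto (fun n => fderiv ℂ (f n) x) l (𝓝 y) :=
    fun x hx => CompleteSpace.complete (hcauchy.cauchy_map hx)
  choose! g' hg' using hpointwise
  have hball : ball x₀ r ∈ 𝓝 x₀ := ball_mem_nhds x₀ hr
  have hderiv : TendstoUniformlyOnFilter (fun n => fderiv ℂ (f n)) g' l (𝓝 x₀) :=
    (hcauchy.tendstoUniformlyOn_of_tendsto hg').tendstoUniformlyOnFilter.mono_right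
      (le_principal_iff.2 hball)
  have hderivAt : ∀ᶠ n : ι × E in l ×ˢ 𝓝 x₀,
      HasFDerivAt (f n.1) (fderiv ℂ (f n.1) n.2) n.2 := by
    filter_upwards [hf.prod_mk (hU.mem_nhds hx₀)] with ⟨n, y⟩ ⟨hn, hy⟩
    exact (hn.differentiableAt (hU.mem_nhds hy)).hasFDerivAt
  have htendsto : ∀ᶠ y in 𝓝 x₀, Tendsto (fun n => f n y) l (𝓝 (g y)) := by
    filter_upwards [hU.mem_nhds hx₀] with y hy using hfg.tendsto_at hy
  exact (hasFDerivAt_of_tendstoUniformlyOnFilter hderiv hderivAt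
    htendsto).differentiableAt.differentiableWithinAt

theorem dist_dslope_deriv_le [CompleteSpace F] {f : ℂ → F} {c z : ℂ} {r M : ℝ}
    (hf : DifferentiableOn ℂ f (ball c r)) (hM : ∀ y ∈ ball c r, ‖f y‖ ≤ M) (hz : z ∈ ball c r) :
    dist (dslope f c z) (deriv f c) ≤ 4 * M / r ^ 2 * dist z c := by
  have hr : 0 < r := pos_of_mem_ball hz
  have hdslope : ∀ y ∈ ball c r, ‖dslope f c y‖ ≤ 2 * M / r := fun y hy => by
    refine Complex.norm_dslope_le_div_of_mapsTo_ball hf (fun y hy => ?_) hy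
    rw [mem_closedBall_iff_norm, two_mul]
    exact norm_sub_le_of_le (hM y hy) (hM c (mem_ball_self hr))
  rw [← dslope_same f c]
  refine (Complex.dist_le_div_mul_dist_of_mapsTo_ball (R₂ := 2 * M / r + 2 * M / r)
    ((Complex.differentiableOn_dslope (ball_mem_nhds c hr)).2 hf) (fun y hy => ?_) hz).trans_eq ?_
  · rw [mem_closedBall_iff_norm]
    exact norm_sub_le_of_le (hdslope y hy) (hdslope c (mem_ball_self hr))
  · field_simp
    ring

theorem differentiableOn_comp_add_smul {f : E → F} {U : Set E} {D : Set ℂ} {x v : E}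
    (hf : DifferentiableOn ℂ f U) (hD : ∀ ζ ∈ D, x + ζ • v ∈ U) :
    DifferentiableOn ℂ (fun ζ : ℂ => f (x + ζ • v)) D :=
  hf.comp (by fun_prop) hD

theorem add_smul_mem_ball {x₀ x v : E} {r : ℝ} {ζ : ℂ} (hx : x ∈ ball x₀ r)
    (hζ : ζ ∈ ball 0 (r / (‖v‖ + 1))) : x + ζ • v ∈ ball x₀ (2 * r) := by
  have hsmul : ‖ζ • v‖ < r := by
    rw [mem_ball_zero_iff, lt_div_iff₀ (by positivity)] at hζ
    rw [norm_smul]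
    nlinarith [norm_nonneg ζ]
  rw [mem_ball_iff_norm] at hx ⊢
  calc ‖x + ζ • v - x₀‖ = ‖(x - x₀) + ζ • v‖ := by congr 1; abel
    _ ≤ ‖x - x₀‖ + ‖ζ • v‖ := norm_add_le _ _
    _ < 2 * r := by linarith

theorem differentiableOn_lineDeriv [CompleteSpace F] {f : E → F} {U : Set E} (hU : IsOpen U)
    (hf : DifferentiableOn ℂ f U) (v : E) : DifferentiableOn ℂ (fun x => lineDeriv ℂ f x v) U := by
  intro x₀ hx₀
  obtain ⟨R, hR, M, hRU, hM⟩ := exists_ball_forall_norm_le hU hf.continuousOn hx₀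
  obtain ⟨r, hr, rfl⟩ : ∃ r, 0 < r ∧ 2 * r = R := ⟨R / 2, by positivity, by ring⟩
  set ρ := r / (‖v‖ + 1)
  have hρ : 0 < ρ := by positivity
  have hsmall : ∀ᶠ h in 𝓝[≠] (0 : ℂ), h ∈ ball 0 ρ :=
    mem_nhdsWithin_of_mem_nhds (ball_mem_nhds 0 hρ)
  have hlimit : TendstoUniformlyOn (fun h x => dslope (fun ζ : ℂ => f (x + ζ • v)) 0 h)
      (fun x => lineDeriv ℂ f x v) (𝓝[≠] 0) (ball x₀ r) := by
    refine Metric.tendstoUniformlyOn_iff.2 fun ε hε => ?_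
    have hmodulus : Tendsto (fun h : ℂ => 4 * M / ρ ^ 2 * dist h 0) (𝓝[≠] 0) (𝓝 0) :=
      (Continuous.tendsto' (by fun_prop) _ _ (by simp)).mono_left nhdsWithin_le_nhds
    filter_upwards [hsmall, hmodulus.eventually_lt_const hε] with h hh hlt x hx
    rw [dist_comm]
    refine (dist_dslope_deriv_le ?_ (fun ζ hζ => hM _ (add_smul_mem_ball hx hζ)) hh).trans_lt hlt
    exact differentiableOn_comp_add_smul hf fun ζ hζ => hRU (add_smul_mem_ball hx hζ)
  refine ((differentiableOn_of_tendstoUniformlyOn isOpen_ball hlimit ?_).differentiableAt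
    (ball_mem_nhds x₀ hr)).differentiableWithinAt
  filter_upwards [hsmall, self_mem_nhdsWithin] with h hh hne
  have htranslate : DifferentiableOn ℂ (fun x => f (x + h • v)) (ball x₀ r) :=
    hf.comp (by fun_prop) fun x hx => hRU (add_smul_mem_ball hx hh)
  have hball : ball x₀ r ⊆ U := (ball_subset_ball (by linarith)).trans hRU
  simp only [dslope_of_ne _ hne, slope_def_module, zero_smul, add_zero]
  exact (htranslate.sub (hf.mono hball)).const_smul _

end Holomorphic

section LineTaylor

variable {E F : Type*} [NormedAddCommGroup E] [NormedSpace ℂ E]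
  [NormedAddCommGroup F] [NormedSpace ℂ F]

/-- The `n`-th Taylor coefficient at `0` of the restriction `ζ ↦ f (y + ζ • v)` of `f` to the
complex line through `y` in the direction `v`, as a function of the base point `y`. -/
noncomputable def lineTaylorCoeff (f : E → F) (v : E) (n : ℕ) (y : E) : F :=
  (n.factorial : ℂ)⁻¹ • iteratedDeriv n (fun ζ : ℂ => f (y + ζ • v)) 0

theorem iteratedDeriv_succ_comp_add_smul (f : E → F) (v : E) (n : ℕ) (y : E) :
    iteratedDeriv (n + 1) (fun ζ : ℂ => f (y + ζ • v)) =
      iteratedDeriv n fun ζ : ℂ => lineDeriv ℂ f (y + ζ • v) v := by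
  rw [iteratedDeriv_succ']
  congr 1 with ζ
  have h := deriv_comp_const_add (fun ξ : ℂ => f (y + ξ • v)) ζ 0
  simpa only [lineDeriv, add_zero, add_smul, ← add_assoc] using h.symm

theorem differentiableOn_lineTaylorCoeff [CompleteSpace F] {f : E → F} {U : Set E}
    (hU : IsOpen U) (hf : DifferentiableOn ℂ f U) (v : E) (n : ℕ) :
    DifferentiableOn ℂ (lineTaylorCoeff f v n) U := by
  refine DifferentiableOn.const_smul ?_ _
  induction n generalizing f with
  | zero => simpa only [iteratedDeriv_zero, zero_smul, add_zero] using hf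
  | succ n ih =>
    simpa only [iteratedDeriv_succ_comp_add_smul] using ih (differentiableOn_lineDeriv hU hf v)

theorem norm_lineTaylorCoeff_le [CompleteSpace F] {f : E → F} {U : Set E} {y v : E} {r M : ℝ}
    (hr : 0 < r) (hf : DifferentiableOn ℂ f U) (hU : ∀ ζ ∈ closedBall (0 : ℂ) r, y + ζ • v ∈ U)
    (hM : ∀ ζ ∈ closedBall (0 : ℂ) r, ‖f (y + ζ • v)‖ ≤ M) (n : ℕ) :
    ‖lineTaylorCoeff f v n y‖ ≤ M / r ^ n := by
  have hdiff : DiffContOnCl ℂ (fun ζ : ℂ => f (y + ζ • v)) (ball 0 r) :=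
    (differentiableOn_comp_add_smul hf fun ζ hζ =>
      hU ζ (closure_ball_subset_closedBall hζ)).diffContOnCl
  have hcauchy := Complex.norm_iteratedDeriv_le_of_forall_mem_sphere_norm_le n hr hdiff
    fun ζ hζ => hM ζ (sphere_subset_closedBall hζ)
  rw [lineTaylorCoeff, norm_smul, norm_inv, Complex.norm_natCast,
    inv_mul_le_iff₀ (by positivity), ← mul_div_assoc]
  exact hcauchy

theorem exists_norm_lineTaylorCoeff_le_of_isOpen [CompleteSpace F] {f : E → F} {U : Set E}
    (hU : IsOpen U) (hf : DifferentiableOn ℂ f U) (v : E) {y₀ : E} (hy₀ : y₀ ∈ U) :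
    ∃ r > 0, ∃ M, ∀ y ∈ ball y₀ r, ∀ n, ‖lineTaylorCoeff f v n y‖ ≤ M / r ^ n := by
  obtain ⟨R, hR, M, hRU, hM⟩ := exists_ball_forall_norm_le hU hf.continuousOn hy₀
  have hsub : ball y₀ (R / 2 / (‖v‖ + 1) / 2) ⊆ ball y₀ (R / 2) :=
    ball_subset_ball <| (half_le_self (by positivity)).trans <|
      div_le_self (by positivity) (by linarith [norm_nonneg v])
  have hline : ∀ y ∈ ball y₀ (R / 2 / (‖v‖ + 1) / 2),
      ∀ ζ ∈ closedBall (0 : ℂ) (R / 2 / (‖v‖ + 1) / 2), y + ζ • v ∈ ball y₀ R :=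
    fun y hy ζ hζ => by
      rw [← mul_div_cancel₀ R two_ne_zero]
      exact add_smul_mem_ball (hsub hy) (closedBall_subset_ball (half_lt_self (by positivity)) hζ)
  exact ⟨R / 2 / (‖v‖ + 1) / 2, by positivity, M, fun y hy => norm_lineTaylorCoeff_le
    (by positivity) (hf.mono hRU) (hline y hy) fun ζ hζ => hM _ (hline y hy ζ hζ)⟩

theorem exists_norm_lineTaylorCoeff_le_of_isCompact [CompleteSpace F] {f : E → F} {U S : Set E}
    {v : E} {r : ℝ} (hr : 0 < r) (hf : DifferentiableOn ℂ f U) (hS : IsCompact S)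
    (hSU : ∀ y ∈ S, ∀ ζ ∈ closedBall (0 : ℂ) r, y + ζ • v ∈ U) :
    ∃ M, ∀ y ∈ S, ∀ n, ‖lineTaylorCoeff f v n y‖ ≤ M / r ^ n := by
  have hcont : ContinuousOn (fun q : E × ℂ => f (q.1 + q.2 • v)) (S ×ˢ closedBall 0 r) :=
    hf.continuousOn.comp (by fun_prop) fun q hq => hSU q.1 hq.1 q.2 hq.2
  obtain ⟨M, hM⟩ := (hS.prod (isCompact_closedBall 0 r)).exists_bound_of_continuousOn hcont
  exact ⟨M, fun y hy n => norm_lineTaylorCoeff_le hr hf (hSU y hy)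
    (fun ζ hζ => hM (y, ζ) ⟨hy, hζ⟩) n⟩

theorem hasSum_taylorSeries_of_segment_subset [CompleteSpace F] {φ : ℂ → F} {D : Set ℂ} {z : ℂ}
    {K M : ℝ} (hD : IsOpen D) (hφ : DifferentiableOn ℂ φ D) (hseg : segment ℝ 0 z ⊆ D)
    (hM : ∀ n : ℕ, ‖(n.factorial : ℂ)⁻¹ • iteratedDeriv n φ 0‖ ≤ M / K ^ n) (hz : ‖z‖ < K) :
    HasSum (fun n : ℕ => z ^ n • (n.factorial : ℂ)⁻¹ • iteratedDeriv n φ 0) (φ z) := by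
  obtain ⟨K', hzK', hK'K⟩ := exists_between hz
  have hK' : 0 < K' := (norm_nonneg z).trans_lt hzK'
  have hK : 0 < K := hK'.trans hK'K
  have hsummable : Summable fun n : ℕ => M * (K' / K) ^ n :=
    (summable_geometric_of_lt_one (by positivity) ((div_lt_one hK).2 hK'K)).mul_left M
  have hterm : ∀ n : ℕ, ∀ w ∈ ball (0 : ℂ) K',
      ‖w ^ n • (n.factorial : ℂ)⁻¹ • iteratedDeriv n φ 0‖ ≤ M * (K' / K) ^ n := fun n w hw => by
    rw [mem_ball_zero_iff] at hw
    calc ‖w ^ n • (n.factorial : ℂ)⁻¹ • iteratedDeriv n φ 0‖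
        = ‖w‖ ^ n * ‖(n.factorial : ℂ)⁻¹ • iteratedDeriv n φ 0‖ := by rw [norm_smul, norm_pow]
      _ ≤ K' ^ n * (M / K ^ n) := by gcongr; exact hM n
      _ = M * (K' / K) ^ n := by rw [div_pow]; ring
  set P : ℂ → F := fun w => ∑' n : ℕ, w ^ n • (n.factorial : ℂ)⁻¹ • iteratedDeriv n φ 0
  have hP : DifferentiableOn ℂ P (ball 0 K') :=
    Complex.differentiableOn_tsum_of_summable_norm hsummable (fun n => by fun_prop) isOpen_ball
      hterm
  have hnear : φ =ᶠ[𝓝 0] P := by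
    obtain ⟨r, hr, hrD⟩ := Metric.isOpen_iff.1 hD 0 (hseg (left_mem_segment ℝ 0 z))
    filter_upwards [ball_mem_nhds 0 hr] with w hw
    have htaylor := Complex.hasSum_taylorSeries_on_ball (hφ.mono hrD) hw
    simp only [sub_zero, smul_comm _ (w ^ _)] at htaylor
    exact htaylor.tsum_eq.symm
  have hsegK' : segment ℝ 0 z ⊆ ball (0 : ℂ) K' :=
    (convex_ball 0 K').segment_subset (mem_ball_self hK') (mem_ball_zero_iff.2 hzK')
  have heq : Set.EqOn φ P (segment ℝ 0 z) :=
    ((hφ.analyticOnNhd hD).mono hseg).eqOn_of_preconnected_of_eventuallyEq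
      ((hP.analyticOnNhd isOpen_ball).mono hsegK') (convex_segment 0 z).isPreconnected
      (left_mem_segment ℝ 0 z) hnear
  rw [heq (right_mem_segment ℝ 0 z)]
  exact (Summable.of_norm_bounded hsummable fun n =>
    hterm n z (hsegK' (right_mem_segment ℝ 0 z))).hasSum

theorem hasSum_lineTaylorCoeff [CompleteSpace F] {f : E → F} {U : Set E} {y v : E} {z : ℂ}
    {K M : ℝ} (hU : IsOpen U) (hf : DifferentiableOn ℂ f U)
    (hseg : ∀ ζ ∈ segment ℝ 0 z, y + ζ • v ∈ U)
    (hM : ∀ n, ‖lineTaylorCoeff f v n y‖ ≤ M / K ^ n) (hz : ‖z‖ < K) :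
    HasSum (fun n => z ^ n • lineTaylorCoeff f v n y) (f (y + z • v)) :=
  hasSum_taylorSeries_of_segment_subset
    (hU.preimage (by fun_prop : Continuous fun ζ : ℂ => y + ζ • v))
    (differentiableOn_comp_add_smul hf fun _ hζ => hζ) hseg hM hz

end LineTaylor

section ThreeBalls

variable {E F : Type*} [NormedAddCommGroup E] [NormedSpace ℂ E]
  [NormedAddCommGroup F] [NormedSpace ℂ F]

theorem add_exp_smul_mem_closedBall {c u : E} {r : ℝ} (hu : ‖u‖ ≤ 1) (hr : 0 < r) {z : ℂ}
    (hz : z.re ≤ Real.log r) : c + Complex.exp z • u ∈ closedBall c r := by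
  rw [mem_closedBall_iff_norm, add_sub_cancel_left, norm_smul, Complex.norm_exp]
  exact (mul_le_of_le_one_right (Real.exp_nonneg _) hu).trans ((Real.le_log_iff_exp_le hr).1 hz)

theorem norm_le_interp_of_mem_closedBall {f : E → F} {c x : E} {r₁ r r₂ a b : ℝ} (hr₁ : 0 < r₁)
    (hr₁r : r₁ ≤ r) (hrr₂ : r ≤ r₂) (hr₁r₂ : r₁ < r₂)
    (hf : DifferentiableOn ℂ f (closedBall c r₂))
    (ha : ∀ y ∈ closedBall c r₁, ‖f y‖ ≤ a) (hb : ∀ y ∈ closedBall c r₂, ‖f y‖ ≤ b)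
    (hx : x ∈ closedBall c r) :
    ‖f x‖ ≤ a ^ (1 - (Real.log r - Real.log r₁) / (Real.log r₂ - Real.log r₁)) *
      b ^ ((Real.log r - Real.log r₁) / (Real.log r₂ - Real.log r₁)) := by
  have hr : 0 < r := hr₁.trans_le hr₁r
  have hr₂ : 0 < r₂ := hr₁.trans hr₁r₂
  set u : E := (r⁻¹ : ℂ) • (x - c)
  have hu : ‖u‖ ≤ 1 := by
    rw [norm_smul, norm_inv, Complex.norm_of_nonneg hr.le, inv_mul_le_iff₀ hr, mul_one]
    exact mem_closedBall_iff_norm.1 hx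
  have hmem : ∀ z : ℂ, z.re ≤ Real.log r₂ → c + Complex.exp z • u ∈ closedBall c r₂ :=
    fun z => add_exp_smul_mem_closedBall hu hr₂
  have hdiff : DiffContOnCl ℂ (fun z : ℂ => f (c + Complex.exp z • u))
      (Complex.HadamardThreeLines.verticalStrip (Real.log r₁) (Real.log r₂)) := by
    refine (hf.comp (s := Complex.re ⁻¹' Set.Iic (Real.log r₂)) (by fun_prop) hmem).mono
      (closure_minimal (fun z hz => hz.2.le) (isClosed_Iic.preimage Complex.continuous_re))
      |>.diffContOnCl
  have hbdd : BddAbove (norm ∘ (fun z : ℂ => f (c + Complex.exp z • u)) ''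
      Complex.HadamardThreeLines.verticalClosedStrip (Real.log r₁) (Real.log r₂)) :=
    ⟨b, by rintro _ ⟨z, hz, rfl⟩; exact hb _ (hmem z hz.2)⟩
  have hinterp := Complex.HadamardThreeLines.norm_le_interp_of_mem_verticalClosedStrip'
    (z := (Real.log r : ℂ)) (Real.log_lt_log hr₁ hr₁r₂)
    ⟨Real.log_le_log hr₁ hr₁r, Real.log_le_log hr hrr₂⟩ hdiff hbdd
    (fun z hz => ha _ (add_exp_smul_mem_closedBall hu hr₁ (le_of_eq hz)))
    (fun z hz => hb _ (hmem z (le_of_eq hz)))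
  have hxu : c + Complex.exp (Real.log r) • u = x := by
    rw [← Complex.ofReal_exp, Real.exp_log hr, smul_inv_smul₀ (Complex.ofReal_ne_zero.2 hr.ne'),
      add_sub_cancel]
  rwa [hxu] at hinterp

theorem dist_le_of_forall_norm_le {f : E → F} {c x y : E} {R M : ℝ}
    (hf : DifferentiableOn ℂ f (ball c R)) (hM : ∀ z ∈ ball c R, ‖f z‖ ≤ M)
    (hx : x ∈ ball c (R / 2)) (hy : y ∈ ball c (R / 2)) :
    dist (f x) (f y) ≤ 4 * M / R * dist x y := by
  have hR : 0 < R := by linarith [pos_of_mem_ball hx]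
  have hsub : ball y (R / 2) ⊆ ball c R := ball_subset_ball' (by linarith [mem_ball.1 hy])
  have hdist : ∀ z ∈ ball c R, dist (f z) (f y) ≤ 2 * M := fun z hz => by
    rw [dist_eq_norm, two_mul]
    exact norm_sub_le_of_le (hM z hz) (hM y (hsub (mem_ball_self (half_pos hR))))
  rcases lt_or_ge (dist x y) (R / 2) with hnear | hfar
  · refine (Complex.dist_le_div_mul_dist_of_mapsTo_ball (hf.mono hsub)
      (fun z hz => hdist z (hsub hz)) hnear).trans_eq ?_
    ring
  · have hM₀ : 0 ≤ 2 * M := dist_nonneg.trans (hdist x (ball_subset_ball (by linarith) hx))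
    calc dist (f x) (f y) ≤ 2 * M := hdist x (ball_subset_ball (by linarith) hx)
      _ = 4 * M / R * (R / 2) := by field_simp; ring
      _ ≤ 4 * M / R * dist x y := by
        gcongr
        exact div_nonneg (by linarith) hR.le

theorem norm_sub_sq_le_of_forall_norm_sq_le {H : Type*} [NormedAddCommGroup H]
    [InnerProductSpace ℂ H] {f : E → H} {c x : E} {R δ : ℝ} (hδ : 0 < δ) (hR : 0 < R)
    (hf : DifferentiableOn ℂ f (ball c R)) (hmax : ∀ y ∈ ball c R, ‖f y‖ ^ 2 ≤ ‖f c‖ ^ 2 + δ)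
    (hx : x ∈ closedBall c (R / 2)) : ‖f x - f c‖ ^ 2 ≤ 3 * δ := by
  have hline : ∀ ζ ∈ ball (0 : ℂ) 2, c + ζ • (x - c) ∈ ball c R := fun ζ hζ => by
    rw [mem_ball_zero_iff] at hζ
    rw [mem_closedBall_iff_norm] at hx
    rw [mem_ball_iff_norm, add_sub_cancel_left, norm_smul]
    nlinarith [norm_nonneg ζ]
  set φ : ℂ → ℂ := fun ζ => inner ℂ (f c) (f (c + ζ • (x - c)) - f c)
  have hφ : DifferentiableOn ℂ φ (ball 0 2) :=
    (innerSL ℂ (f c)).differentiable.comp_differentiableOn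
      ((differentiableOn_comp_add_smul hf hline).sub_const (f c))
  have hsplit : ∀ ζ, ‖f (c + ζ • (x - c))‖ ^ 2 =
      ‖f c‖ ^ 2 + 2 * (φ ζ).re + ‖f (c + ζ • (x - c)) - f c‖ ^ 2 := fun ζ => by
    have h := norm_add_sq (𝕜 := ℂ) (f c) (f (c + ζ • (x - c)) - f c)
    rw [add_sub_cancel] at h
    exact h
  have hre : ∀ ζ ∈ ball (0 : ℂ) 2, (φ ζ).re ≤ δ / 2 := fun ζ hζ => by
    linarith [hsplit ζ, hmax _ (hline ζ hζ), sq_nonneg ‖f (c + ζ • (x - c)) - f c‖]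
  have hφ₁ : ‖φ 1‖ ≤ δ := by
    have h := Complex.borelCaratheodory_zero (half_pos hδ) hφ hre two_pos
      (z := 1) (by simp) (by simp [φ])
    norm_num at h
    linarith
  have hsplit₁ := hsplit 1
  rw [one_smul, add_sub_cancel] at hsplit₁
  have hfx := hmax x (closedBall_subset_ball (half_lt_self hR) hx)
  linarith [neg_abs_le (φ 1).re, Complex.abs_re_le_norm (φ 1)]

end ThreeBalls

theorem eventually_lt_rpow_mul_rpow {θ a c : ℝ} (hθ : θ < 1) (ha : 0 < a) (hc : 0 < c) :
    ∀ᶠ t in 𝓝[>] (0 : ℝ), t < a ^ (1 - θ) * (c * t) ^ θ := by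
  have hlim : Tendsto (fun t : ℝ => t ^ (1 - θ)) (𝓝[>] 0) (𝓝 0) := by
    have h := (Real.continuousAt_rpow_const 0 (1 - θ) (Or.inr (sub_pos.2 hθ).le)).tendsto
    rw [Real.zero_rpow (sub_pos.2 hθ).ne'] at h
    exact h.mono_left nhdsWithin_le_nhds
  filter_upwards [hlim.eventually_lt_const (show 0 < a ^ (1 - θ) * c ^ θ by positivity),
    self_mem_nhdsWithin] with t hlt (ht : 0 < t)
  calc t = t ^ (1 - θ) * t ^ θ := by rw [← Real.rpow_add ht, sub_add_cancel, Real.rpow_one]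
    _ < a ^ (1 - θ) * c ^ θ * t ^ θ := by gcongr
    _ = a ^ (1 - θ) * (c * t) ^ θ := by rw [Real.mul_rpow hc.le ht.le, mul_assoc]

theorem div_pow_rpow_mul_div_pow_rpow {M a b θ : ℝ} (hM : 0 < M) (ha : 0 < a) (hb : 0 < b)
    (n : ℕ) : (M / a ^ n) ^ (1 - θ) * (M / b ^ n) ^ θ = M / (a ^ (1 - θ) * b ^ θ) ^ n := by
  rw [Real.div_rpow hM.le (by positivity), Real.div_rpow hM.le (by positivity), div_mul_div_comm,
    ← Real.rpow_add hM, sub_add_cancel, Real.rpow_one, mul_pow, Real.rpow_pow_comm ha.le,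
    Real.rpow_pow_comm hb.le]

section Extension

variable {X E Y : Type*} [NormedAddCommGroup E] [NormedSpace ℂ E]
  [NormedAddCommGroup Y] [NormedSpace ℂ Y]

/-- The translates `g x + ζ • v` lie in `Ω` for all `x ∈ S` and all `ζ` in a truncated sector with
vertex `0` about the positive real axis. The sector, of length `δ` and aperture governed by `c`, is
encoded as a union of discs `closedBall t (c * t)`. -/
def MapsToInwardSector (g : X → E) (S : Set X) (Ω : Set E) (v : E) (c δ : ℝ) : Prop :=
  ∀ x ∈ S, ∀ t ∈ Set.Ioo (0 : ℝ) δ, ∀ ζ ∈ closedBall (t : ℂ) (c * t), g x + ζ • v ∈ Ω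

/-- Near each boundary point of `Ω` there is a direction `v` such that all sectors in the direction
`v` with vertex in `closure Ω` lie in `Ω`. This is the only property of Lipschitz boundaries that
the argument uses. -/
def HasInwardSectors (Ω : Set E) : Prop :=
  ∀ p ∈ frontier Ω, ∃ v : E, ∃ c > 0, ∃ δ > 0,
    MapsToInwardSector id (closure Ω ∩ ball p δ) Ω v c δ

theorem MapsToInwardSector.add_smul_mem {g : X → E} {S : Set X} {Ω : Set E} {v : E} {c δ t : ℝ}
    (h : MapsToInwardSector g S Ω v c δ) (hc : 0 < c) {x : X} (hx : x ∈ S)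
    (ht : t ∈ Set.Ioo 0 δ) : g x + (t : ℂ) • v ∈ Ω :=
  h x hx t ht t (mem_closedBall_self (mul_pos hc ht.1).le)

theorem MapsToInwardSector.add_smul_mem_of_mem_segment {g : X → E} {S : Set X} {Ω : Set E} {v : E}
    {c δ t : ℝ} (h : MapsToInwardSector g S Ω v c δ) (hc : 0 < c) {x : X} (hx : x ∈ S)
    (hgx : g x ∈ Ω) (ht : t ∈ Set.Ioo 0 δ) {ζ : ℂ} (hζ : ζ ∈ segment ℝ 0 (-t : ℂ)) :
    g x + (t : ℂ) • v + ζ • v ∈ Ω := by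
  rw [segment_eq_image] at hζ
  obtain ⟨s, hs, rfl⟩ := hζ
  have hpoint : g x + (t : ℂ) • v + ((1 - s) • (0 : ℂ) + s • (-t : ℂ)) • v =
      g x + (((1 - s) * t : ℝ) : ℂ) • v := by
    rw [add_assoc, ← add_smul]
    congr 2
    simp only [smul_zero, zero_add, Complex.real_smul]
    push_cast
    ring
  rw [hpoint]
  rcases hs.2.eq_or_lt with rfl | hs₁
  · simpa using hgx
  · refine h.add_smul_mem hc hx ⟨mul_pos (sub_pos.2 hs₁) ht.1, ?_⟩
    nlinarith [hs.1, ht.1, ht.2]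

theorem exists_norm_lineTaylorCoeff_comp_le_of_isCompact [TopologicalSpace X] [CompleteSpace Y]
    {Ω : Set E} {F : E → Y} {g : X → E} {S : Set X} {v : E} {c δ t : ℝ}
    (hF : DifferentiableOn ℂ F Ω) (hS : IsCompact S) (hg : ContinuousOn g S) (hc : 0 < c)
    (hsector : MapsToInwardSector g S Ω v c δ) (ht : t ∈ Set.Ioo 0 δ) :
    ∃ M, ∀ x ∈ S, ∀ n, ‖lineTaylorCoeff F v n (g x + (t : ℂ) • v)‖ ≤ M / (c * t) ^ n := by
  have hcompact : IsCompact ((fun x => g x + (t : ℂ) • v) '' S) :=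
    hS.image_of_continuousOn (hg.add continuousOn_const)
  have hdiscs : ∀ y ∈ (fun x => g x + (t : ℂ) • v) '' S,
      ∀ ζ ∈ closedBall (0 : ℂ) (c * t), y + ζ • v ∈ Ω := by
    rintro _ ⟨x, hx, rfl⟩ ζ hζ
    rw [add_assoc, ← add_smul]
    refine hsector x hx t ht _ ?_
    rwa [mem_closedBall_iff_norm, add_sub_cancel_left, ← mem_closedBall_zero_iff]
  obtain ⟨M, hM⟩ :=
    exists_norm_lineTaylorCoeff_le_of_isCompact (mul_pos hc ht.1) hF hcompact hdiscs
  exact ⟨M, fun x hx => hM _ (Set.mem_image_of_mem _ hx)⟩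

variable [NormedAddCommGroup X] [NormedSpace ℂ X]

theorem exists_norm_le_div_interp_pow {u : ℕ → X → Y} {x₁ : X} {r₁ r r₂ a b Ma Mb : ℝ}
    (hr₁ : 0 < r₁) (hr₁r : r₁ ≤ r) (hrr₂ : r < r₂) (ha : 0 < a) (hb : 0 < b)
    (hu : ∀ n, DifferentiableOn ℂ (u n) (closedBall x₁ r₂))
    (hMa : ∀ x ∈ closedBall x₁ r₁, ∀ n, ‖u n x‖ ≤ Ma / a ^ n)
    (hMb : ∀ x ∈ closedBall x₁ r₂, ∀ n, ‖u n x‖ ≤ Mb / b ^ n) :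
    let θ := (Real.log r - Real.log r₁) / (Real.log r₂ - Real.log r₁)
    ∃ M, ∀ x ∈ closedBall x₁ r, ∀ n, ‖u n x‖ ≤ M / (a ^ (1 - θ) * b ^ θ) ^ n := by
  intro θ
  set M := max (max Ma Mb) 1
  have hM : 0 < M := one_pos.trans_le (le_max_right _ _)
  refine ⟨M, fun x hx n => ?_⟩
  rw [← div_pow_rpow_mul_div_pow_rpow hM ha hb]
  refine norm_le_interp_of_mem_closedBall hr₁ hr₁r hrr₂.le (hr₁r.trans_lt hrr₂) (hu n)
    (fun y hy => (hMa y hy n).trans ?_) (fun y hy => (hMb y hy n).trans ?_) hx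
  · gcongr
    exact (le_max_left _ _).trans (le_max_left _ _)
  · gcongr
    exact (le_max_right _ _).trans (le_max_left _ _)

-- The Taylor coefficients at `g x + t • v` decay with rate `c * t` for all `x`, and with a rate `a`
-- independent of `t` for `x` near `x₁`. The three balls theorem interpolates these to the rate
-- `a ^ (1 - θ) * (c * t) ^ θ`, which exceeds `t` for small `t` because `θ < 1`.
theorem exists_norm_lineTaylorCoeff_comp_le [ProperSpace X] [CompleteSpace Y] {Ω : Set E}
    {F : E → Y} {g : X → E} {x₁ : X} {v : E} {c δ r r₂ : ℝ} (hΩ : IsOpen Ω)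
    (hF : DifferentiableOn ℂ F Ω) (hg : DifferentiableOn ℂ g (closedBall x₁ r₂)) (hr : 0 < r)
    (hrr₂ : r < r₂) (hc : 0 < c) (hδ : 0 < δ)
    (hsector : MapsToInwardSector g (closedBall x₁ r₂) Ω v c δ) (hx₁ : g x₁ ∈ Ω) :
    ∃ t ∈ Set.Ioo 0 δ, ∃ K > t, ∃ M, ∀ x ∈ closedBall x₁ r, ∀ n,
      ‖lineTaylorCoeff F v n (g x + (t : ℂ) • v)‖ ≤ M / K ^ n := by
  obtain ⟨a, ha, Ma, hMa⟩ := exists_norm_lineTaylorCoeff_le_of_isOpen hΩ hF v hx₁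
  obtain ⟨r₁, hr₁, hr₁r, hgr₁⟩ :
      ∃ r₁ > 0, r₁ < r ∧ ∀ x ∈ closedBall x₁ r₁, g x ∈ ball (g x₁) (a / 2) := by
    have hcont : ContinuousAt g x₁ :=
      hg.continuousOn.continuousAt (closedBall_mem_nhds x₁ (hr.trans hrr₂))
    obtain ⟨ε, hε, hball⟩ := Metric.continuousAt_iff.1 hcont (a / 2) (half_pos ha)
    refine ⟨min ε r / 2, by positivity, ?_, fun x hx => hball ?_⟩
    · linarith [min_le_right ε r]
    · linarith [mem_closedBall.1 hx, min_le_left ε r, lt_min hε hr]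
  set θ := (Real.log r - Real.log r₁) / (Real.log r₂ - Real.log r₁)
  have hθ : θ < 1 :=
    (div_lt_one (sub_pos.2 (Real.log_lt_log hr₁ (hr₁r.trans hrr₂)))).2
      (sub_lt_sub_right (Real.log_lt_log hr hrr₂) _)
  have hshift : Tendsto (fun t : ℝ => ‖(t : ℂ) • v‖) (𝓝[>] 0) (𝓝 0) :=
    (Continuous.tendsto' (by fun_prop) _ _ (by simp)).mono_left nhdsWithin_le_nhds
  obtain ⟨t, ⟨htlt, htv⟩, ht⟩ := (((eventually_lt_rpow_mul_rpow hθ ha hc).and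
    (hshift.eventually_lt_const (half_pos ha))).and (Ioo_mem_nhdsGT hδ)).exists
  obtain ⟨Mb, hMb⟩ := exists_norm_lineTaylorCoeff_comp_le_of_isCompact hF
    (isCompact_closedBall x₁ r₂) hg.continuousOn hc hsector ht
  refine ⟨t, ht, _, htlt, exists_norm_le_div_interp_pow hr₁ hr₁r.le hrr₂ ha (mul_pos hc ht.1)
    (fun n => (differentiableOn_lineTaylorCoeff hΩ hF v n).comp (hg.add_const _) fun x hx =>
      hsector.add_smul_mem hc hx ht) (fun x hx => hMa _ ?_) hMb⟩
  rw [mem_ball_iff_norm, add_sub_right_comm]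
  exact (norm_add_le _ _).trans_lt (by linarith [mem_ball_iff_norm.1 (hgr₁ x hx)])

theorem exists_differentiableOn_ball_eq_comp [ProperSpace X] [CompleteSpace Y] {Ω : Set E}
    {F : E → Y} {g : X → E} {x₁ : X} {v : E} {c δ r r₂ : ℝ} (hΩ : IsOpen Ω)
    (hF : DifferentiableOn ℂ F Ω) (hg : DifferentiableOn ℂ g (closedBall x₁ r₂)) (hr : 0 < r)
    (hrr₂ : r < r₂) (hc : 0 < c) (hδ : 0 < δ)
    (hsector : MapsToInwardSector g (closedBall x₁ r₂) Ω v c δ) (hx₁ : g x₁ ∈ Ω) :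
    ∃ h : X → Y, DifferentiableOn ℂ h (ball x₁ r) ∧ ∀ x ∈ ball x₁ r, g x ∈ Ω → h x = F (g x) := by
  obtain ⟨t, ht, K, hK, M, hM⟩ :=
    exists_norm_lineTaylorCoeff_comp_le hΩ hF hg hr hrr₂ hc hδ hsector hx₁
  have ht₀ : 0 < t := ht.1
  have hsub : ball x₁ r ⊆ closedBall x₁ r₂ := ball_subset_closedBall.trans
    (closedBall_subset_closedBall hrr₂.le)
  have hmem : ∀ x ∈ ball x₁ r, g x + (t : ℂ) • v ∈ Ω := fun x hx =>
    hsector.add_smul_mem hc (hsub hx) ht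
  set u : ℕ → X → Y := fun n x => (-t : ℂ) ^ n • lineTaylorCoeff F v n (g x + (t : ℂ) • v)
  have hu : ∀ n, DifferentiableOn ℂ (u n) (ball x₁ r) := fun n =>
    ((differentiableOn_lineTaylorCoeff hΩ hF v n).comp ((hg.mono hsub).add_const _)
      hmem).const_smul _
  have hsummable : Summable fun n : ℕ => M * (t / K) ^ n :=
    (summable_geometric_of_lt_one (div_nonneg ht₀.le (ht₀.trans hK).le)
      ((div_lt_one (ht₀.trans hK)).2 hK)).mul_left M
  have hterm : ∀ n, ∀ x ∈ ball x₁ r, ‖u n x‖ ≤ M * (t / K) ^ n := fun n x hx => by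
    calc ‖u n x‖ = t ^ n * ‖lineTaylorCoeff F v n (g x + (t : ℂ) • v)‖ := by
          rw [norm_smul, norm_pow, norm_neg, Complex.norm_of_nonneg ht₀.le]
      _ ≤ t ^ n * (M / K ^ n) := by gcongr; exact hM x (ball_subset_closedBall hx) n
      _ = M * (t / K) ^ n := by rw [div_pow]; ring
  refine ⟨fun x => ∑' n, u n x, differentiableOn_of_tendstoUniformlyOn isOpen_ball
    (tendstoUniformlyOn_tsum hsummable hterm)
    (Eventually.of_forall fun s => DifferentiableOn.fun_sum fun n _ => hu n), fun x hx hgx => ?_⟩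
  have htaylor := hasSum_lineTaylorCoeff hΩ hF
    (fun ζ => hsector.add_smul_mem_of_mem_segment hc (hsub hx) hgx ht)
    (hM x (ball_subset_closedBall hx)) (by rwa [norm_neg, Complex.norm_of_nonneg ht₀.le])
  rw [neg_smul, add_neg_cancel_right] at htaylor
  exact htaylor.tsum_eq

theorem exists_isOpen_differentiableOn_eq_comp [ProperSpace X] [CompleteSpace Y] {Ω : Set E}
    {B : Set X} {F : E → Y} {g : X → E} (hΩ : IsOpen Ω) (hsectors : HasInwardSectors Ω)
    (hF : DifferentiableOn ℂ F Ω) (hB : IsOpen B) (hg : DifferentiableOn ℂ g B)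
    (hdense : B ⊆ closure (B ∩ g ⁻¹' Ω)) {x₀ : X} (hx₀ : x₀ ∈ B) :
    ∃ U : Set X, IsOpen U ∧ x₀ ∈ U ∧ ∃ h : X → Y, DifferentiableOn ℂ h U ∧
      ∀ x ∈ U, g x ∈ Ω → h x = F (g x) := by
  by_cases hgx₀ : g x₀ ∈ Ω
  · exact ⟨B ∩ g ⁻¹' Ω, hg.continuousOn.isOpen_inter_preimage hB hΩ, ⟨hx₀, hgx₀⟩, F ∘ g,
      hF.comp (hg.mono Set.inter_subset_left) fun x hx => hx.2, fun _ _ _ => rfl⟩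
  have hclosure : ∀ x ∈ B, g x ∈ closure Ω := fun x hx =>
    ((hg x hx).continuousWithinAt.mono Set.inter_subset_left).mem_closure (hdense hx)
      fun y hy => hy.2
  obtain ⟨v, c, hc, δ, hδ, hsector⟩ := hsectors (g x₀) (hΩ.frontier_eq ▸ ⟨hclosure x₀ hx₀, hgx₀⟩)
  obtain ⟨R, hR, hball⟩ := Metric.isOpen_iff.1
    (hg.continuousOn.isOpen_inter_preimage hB (isOpen_ball (x := g x₀) (ε := δ))) x₀
    ⟨hx₀, mem_ball_self hδ⟩
  obtain ⟨x₁, ⟨-, hx₁Ω⟩, hx₁⟩ := Metric.mem_closure_iff.1 (hdense hx₀) (R / 4) (by positivity)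
  have hsub : closedBall x₁ (R / 2) ⊆ ball x₀ R :=
    closedBall_subset_ball' (by rw [dist_comm]; linarith)
  obtain ⟨h, hh, heq⟩ := exists_differentiableOn_ball_eq_comp (r := R / 4) hΩ hF
    (hg.mono fun x hx => (hball (hsub hx)).1) (by positivity) (by linarith) hc hδ
    (fun x hx => hsector _ ⟨hclosure x (hball (hsub hx)).1, (hball (hsub hx)).2⟩) hx₁Ω
  exact ⟨ball x₁ (R / 4), isOpen_ball, hx₁, h, hh, heq⟩

theorem exists_differentiableOn_eq_comp [ProperSpace X] [CompleteSpace Y] {Ω : Set E}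
    {B : Set X} {F : E → Y} {g : X → E} (hΩ : IsOpen Ω) (hsectors : HasInwardSectors Ω)
    (hF : DifferentiableOn ℂ F Ω) (hB : IsOpen B) (hg : DifferentiableOn ℂ g B)
    (hdense : B ⊆ closure (B ∩ g ⁻¹' Ω)) :
    ∃ h : X → Y, DifferentiableOn ℂ h B ∧ ∀ x ∈ B, g x ∈ Ω → h x = F (g x) := by
  set A := B ∩ g ⁻¹' Ω
  have hlocal : ∀ x₀ ∈ B, ∃ h : X → Y, DifferentiableAt ℂ h x₀ ∧ extendFrom A (F ∘ g) =ᶠ[𝓝 x₀] h :=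
      fun x₀ hx₀ => by
    obtain ⟨U, hU, hx₀U, h, hh, heq⟩ :=
      exists_isOpen_differentiableOn_eq_comp hΩ hsectors hF hB hg hdense hx₀
    refine ⟨h, hh.differentiableAt (hU.mem_nhds hx₀U), ?_⟩
    filter_upwards [hU.mem_nhds hx₀U, hB.mem_nhds hx₀] with x hxU hxB
    have hlim : Tendsto h (𝓝[A] x) (𝓝 (h x)) :=
      (hh.differentiableAt (hU.mem_nhds hxU)).continuousAt.tendsto.mono_left nhdsWithin_le_nhds
    refine extendFrom_eq (hdense hxB) (hlim.congr' ?_)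
    filter_upwards [mem_nhdsWithin_of_mem_nhds (hU.mem_nhds hxU), self_mem_nhdsWithin]
      with y hyU hyA using heq y hyU hyA.2
  refine ⟨extendFrom A (F ∘ g), fun x hx => ?_, fun x hx hgx => ?_⟩
  · obtain ⟨h, hh, heq⟩ := hlocal x hx
    exact (hh.congr_of_eventuallyEq heq).differentiableWithinAt
  · have hcont : ContinuousAt (F ∘ g) x :=
      (hF.continuousOn.continuousAt (hΩ.mem_nhds hgx)).comp
        (hg.continuousOn.continuousAt (hB.mem_nhds hx))
    exact extendFrom_eq (hdense hx) (hcont.tendsto.mono_left nhdsWithin_le_nhds)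

end Extension

section LipschitzBoundary

variable {m : ℕ} {i : Fin m} {C : NNReal} {r : EuclideanSpace ℂ (Fin m) → ℝ}

theorem im_lt_of_lipschitz_subgraph (hr : LipschitzWith C r)
    (hri : ∀ z w : EuclideanSpace ℂ (Fin m),
      (∀ j, j ≠ i → z j = w j) → (z i).re = (w i).re → r z = r w)
    {w : EuclideanSpace ℂ (Fin m)} (hw : (w i).im ≤ r w) {ζ : ℂ} (hζ : ζ.im + C * |ζ.re| < 0) :
    ((w + ζ • EuclideanSpace.single i (1 : ℂ)) i).im < r (w + ζ • EuclideanSpace.single i 1) := by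
  have hproj : r (w + ζ • EuclideanSpace.single i 1) =
      r (w + (ζ.re : ℂ) • EuclideanSpace.single i 1) :=
    hri _ _ (fun j hj => by simp [hj]) (by simp)
  have hdist : |r (w + (ζ.re : ℂ) • EuclideanSpace.single i 1) - r w| ≤ C * |ζ.re| := by
    have h := hr.dist_le_mul (w + (ζ.re : ℂ) • EuclideanSpace.single i 1) w
    rwa [Real.dist_eq, dist_eq_norm, add_sub_cancel_left, norm_smul, PiLp.norm_single,
      norm_one, mul_one, Complex.norm_real, Real.norm_eq_abs] at h
  have him : ((w + ζ • EuclideanSpace.single i (1 : ℂ)) i).im = (w i).im + ζ.im := by simp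
  rw [hproj, him]
  linarith [(abs_le.1 hdist).1]

theorem im_le_of_mem_closure_subgraph {Ω W : Set (EuclideanSpace ℂ (Fin m))}
    {φ : EuclideanSpace ℂ (Fin m) → EuclideanSpace ℂ (Fin m)} (hφ : Continuous φ)
    (hr : Continuous r) (hW : IsOpen W) (hΩW : ∀ z ∈ W, z ∈ Ω ↔ ((φ z) i).im < r (φ z))
    {z : EuclideanSpace ℂ (Fin m)} (hz : z ∈ closure Ω) (hzW : z ∈ W) :
    ((φ z) i).im ≤ r (φ z) := by
  by_contra! hlt
  have hopen : IsOpen (W ∩ {y | r (φ y) < ((φ y) i).im}) :=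
    hW.inter (isOpen_lt (hr.comp hφ) (by fun_prop))
  obtain ⟨y, ⟨hyW, hy⟩, hyΩ⟩ := mem_closure_iff.1 hz _ hopen ⟨hzW, hlt⟩
  exact lt_asymm hy ((hΩW y hyW).1 hyΩ)

theorem norm_lt_and_mul_abs_im_lt_re_of_mem_closedBall (C : NNReal) {t : ℝ} (ht : 0 < t) {ζ : ℂ}
    (hζ : ζ ∈ closedBall (t : ℂ) (1 / (2 * (C + 1)) * t)) :
    ‖ζ‖ < 2 * t ∧ C * |ζ.im| < ζ.re := by
  have hC : (0 : ℝ) ≤ C := C.2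
  rw [mem_closedBall_iff_norm, div_mul_eq_mul_div, one_mul, le_div_iff₀ (by positivity)] at hζ
  have hnorm : ‖ζ‖ ≤ ‖ζ - t‖ + t := by
    simpa [abs_of_pos ht] using norm_add_le (ζ - t) (t : ℂ)
  have hre : |ζ.re - t| ≤ ‖ζ - t‖ := by simpa using Complex.abs_re_le_norm (ζ - t)
  have him : |ζ.im| ≤ ‖ζ - t‖ := by simpa using Complex.abs_im_le_norm (ζ - t)
  constructor <;> nlinarith [(abs_le.1 hre).1, norm_nonneg (ζ - t)]

theorem HasLipschitzBoundary.hasInwardSectors {Ω : Set (EuclideanSpace ℂ (Fin m))}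
    (hΩ : HasLipschitzBoundary Ω) : HasInwardSectors Ω := by
  intro p hp
  obtain ⟨A, b, C, r, i, W, hW, hpW, hr, hri, hΩW⟩ := hΩ p hp
  obtain ⟨ε, hε, hball⟩ := Metric.isOpen_iff.1 hW p hpW
  set e : EuclideanSpace ℂ (Fin m) := EuclideanSpace.single i 1
  have he : ‖(-Complex.I) • A.symm e‖ = 1 := by simp [norm_smul, e]
  refine ⟨(-Complex.I) • A.symm e, 1 / (2 * (C + 1)), by positivity, ε / 3, by positivity,
    fun z hz t ht ζ hζ => ?_⟩
  obtain ⟨hζt, hζC⟩ := norm_lt_and_mul_abs_im_lt_re_of_mem_closedBall C ht.1 hζ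
  have hzW : z ∈ W := hball (ball_subset_ball (by linarith) hz.2)
  have hshift : z + ζ • (-Complex.I) • A.symm e ∈ W := hball <| by
    rw [mem_ball_iff_norm, add_sub_right_comm]
    refine (norm_add_le _ _).trans_lt ?_
    rw [norm_smul, he, mul_one]
    linarith [mem_ball_iff_norm.1 hz.2, ht.2]
  have hchart : A (z + ζ • (-Complex.I) • A.symm e) + b = A z + b + (ζ * -Complex.I) • e := by
    simp only [map_add, map_smul, LinearIsometryEquiv.apply_symm_apply, smul_smul]
    abel
  refine (hΩW _ hshift).2 ?_
  rw [hchart]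
  refine im_lt_of_lipschitz_subgraph hr hri
    (im_le_of_mem_closure_subgraph (by fun_prop) hr.continuous hW hΩW hz.1 hzW) ?_
  simpa using hζC

end LipschitzBoundary

section AlmostPeriods

variable {X Y : Type*}

/-- The maps `G n` extend the shifts `p j ↦ q (n + j)` from the points of the sequence `p` in `B`.
For an orbit `p = q` of a map `F` they stand for the iterates of `F`, which need not be defined
on `B`. -/
def ExtendsShifts (G : ℕ → X → Y) (p : ℕ → X) (q : ℕ → Y) (B : Set X) : Prop :=
  ∀ n j, p j ∈ B → G n (p j) = q (n + j)

/-- The shift by `n` moves no term of the sequence `p` by more than `ε`. -/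
def IsAlmostPeriod [PseudoMetricSpace X] (p : ℕ → X) (ε : ℝ) (n : ℕ) : Prop :=
  ∀ k, dist (p (n + k)) (p k) ≤ ε

theorem exists_le_add_mem_of_forall_exists_add_mem {S : Set ℕ} {L : ℕ} (hzero : 0 ∈ S)
    (hnext : ∀ n ∈ S, ∃ l, 0 < l ∧ l ≤ L ∧ n + l ∈ S) (n : ℕ) : ∃ l ≤ L, n + l ∈ S := by
  induction n with
  | zero => exact ⟨0, L.zero_le, hzero⟩
  | succ n ih =>
    obtain ⟨l, hl, hlS⟩ := ih
    rcases l.eq_zero_or_pos with rfl | hpos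
    · obtain ⟨l', hpos', hl', hlS'⟩ := hnext n hlS
      exact ⟨l' - 1, by omega, by rwa [show n + 1 + (l' - 1) = n + l' by omega]⟩
    · exact ⟨l - 1, by omega, by rwa [show n + 1 + (l - 1) = n + l by omega]⟩

variable [PseudoMetricSpace X] {G : ℕ → X → X} {p : ℕ → X} {U : Set X} {ε : ℝ}

theorem ExtendsShifts.exists_forall_dist_add_le (hG : ExtendsShifts G p p U)
    (hequi : UniformEquicontinuousOn G U) (hε : 0 < ε) :
    ∃ η > 0, ∀ i j, p i ∈ U → p j ∈ U → dist (p i) (p j) < η →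
      ∀ k, dist (p (i + k)) (p (j + k)) ≤ ε := by
  obtain ⟨η, hη, h⟩ := mem_uniformity_dist.1
    (mem_inf_principal.1 (hequi _ (dist_mem_uniformity hε)))
  refine ⟨η, hη, fun i j hi hj hij k => ?_⟩
  have hk := h hij ⟨hi, hj⟩ k
  rw [Set.mem_ofPred_eq, hG k i hi, hG k j hj, add_comm k, add_comm k] at hk
  exact hk.le

theorem ExtendsShifts.frequently_isAlmostPeriod (hG : ExtendsShifts G p p U)
    (hequi : UniformEquicontinuousOn G U) (hU : U ∈ 𝓝 (p 0)) (hrec : MapClusterPt (p 0) atTop p)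
    (hε : 0 < ε) : ∃ᶠ n in atTop, IsAlmostPeriod p ε n := by
  obtain ⟨η, hη, h⟩ := hG.exists_forall_dist_add_le hequi hε
  refine (hrec.frequently (inter_mem hU (ball_mem_nhds _ hη))).mono fun n hn k => ?_
  simpa only [zero_add] using h n 0 hn.1 (mem_of_mem_nhds hU) hn.2 k

-- The return times lie in finitely many classes of nearby values of `p`, and each class shares an
-- increment leading to a later return time.
theorem ExtendsShifts.exists_forall_exists_isAlmostPeriod (hG : ExtendsShifts G p p U)
    (hequi : UniformEquicontinuousOn G U) (hU : U ∈ 𝓝 (p 0)) (hUtb : TotallyBounded U)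
    (hrec : MapClusterPt (p 0) atTop p) (hε : 0 < ε) :
    ∃ L, ∀ n, ∃ l ≤ L, IsAlmostPeriod p ε (n + l) := by
  wlog hεU : closedBall (p 0) ε ⊆ U generalizing ε
  · obtain ⟨r, hr, hrU⟩ := nhds_basis_closedBall.mem_iff.1 hU
    obtain ⟨L, hL⟩ := this (lt_min hε hr)
      ((closedBall_subset_closedBall (min_le_right ε r)).trans hrU)
    refine ⟨L, fun n => ?_⟩
    obtain ⟨l, hl, hperiod⟩ := hL n
    exact ⟨l, hl, fun k => (hperiod k).trans (min_le_left _ _)⟩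
  set S : Set ℕ := {n | IsAlmostPeriod p ε n}
  have hSU : ∀ n ∈ S, p n ∈ U := fun n hn => hεU (hn 0)
  obtain ⟨η, hη, hclose⟩ := hG.exists_forall_dist_add_le hequi (half_pos hε)
  obtain ⟨T, hTS, hTfin, hT⟩ := totallyBounded_iff_subset.1
    (hUtb.subset (Set.image_subset_iff.2 hSU)) _ (dist_mem_uniformity hη)
  have hreturn : ∀ y ∈ T, ∃ n ∈ S, p n = y ∧ ∃ e > 0, IsAlmostPeriod p (ε / 2) (n + e) := by
    intro _ hy
    obtain ⟨n, hn, rfl⟩ := hTS hy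
    obtain ⟨m, hnm, hm⟩ := frequently_atTop'.1
      (hG.frequently_isAlmostPeriod hequi hU hrec (half_pos hε)) n
    exact ⟨n, hn, rfl, m - n, Nat.sub_pos_of_lt hnm, by rwa [Nat.add_sub_cancel' hnm.le]⟩
  choose! ν hνS hνy e he hreturn using hreturn
  refine ⟨hTfin.toFinset.sup e, exists_le_add_mem_of_forall_exists_add_mem (S := S)
    (fun k => by simpa using hε.le) fun n hn => ?_⟩
  obtain ⟨y, hy, hny⟩ := Set.mem_iUnion₂.1 (hT (Set.mem_image_of_mem p hn))
  refine ⟨e y, he y hy, Finset.le_sup (hTfin.mem_toFinset.2 hy), fun k => ?_⟩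
  rw [← hνy y hy] at hny
  calc dist (p (n + e y + k)) (p k)
      ≤ dist (p (n + e y + k)) (p (ν y + e y + k)) + dist (p (ν y + e y + k)) (p k) :=
        dist_triangle _ _ _
    _ ≤ ε / 2 + ε / 2 := by
        refine add_le_add ?_ (hreturn y hy k)
        simpa only [add_assoc] using
          hclose n (ν y) (hSU n hn) (hSU _ (hνS y hy)) hny (e y + k)
    _ = ε := add_halves ε

end AlmostPeriods

section Orbit

theorem mapsTo_of_subset_closure {X Y : Type*} [TopologicalSpace X] [TopologicalSpace Y]
    {f : X → Y} {B D : Set X} {C : Set Y} (hB : IsOpen B) (hD : B ⊆ closure D)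
    (hf : ContinuousOn f B) (hC : IsClosed C) (hfC : Set.MapsTo f (B ∩ D) C) :
    Set.MapsTo f B C := by
  intro x hx
  have hmem : f x ∈ closure C := ((hf x hx).mono Set.inter_subset_left).mem_closure
    (hB.inter_closure ⟨hx, hD hx⟩) hfC
  rwa [hC.closure_eq] at hmem

theorem subset_closure_image_Ici {X : Type*} [TopologicalSpace X] [T1Space X]
    [∀ x : X, NeBot (𝓝[≠] x)] {p : ℕ → X} {V : Set X} (hV : IsOpen V)
    (hp : V ⊆ closure (Set.range p)) (N : ℕ) : V ⊆ closure (p '' Set.Ici N) := by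
  have hfin : (p '' Set.Iio N).Finite := (Set.finite_Iio N).image p
  have hrange : Set.range p = p '' Set.Iio N ∪ p '' Set.Ici N := by
    rw [← Set.image_union, Set.Iio_union_Ici, Set.image_univ]
  rw [hrange, closure_union, hfin.isClosed.closure_eq] at hp
  refine ((dense_univ.sdiff_finite hfin).open_subset_closure_inter hV).trans
    (closure_minimal (fun x hx => ?_) isClosed_closure)
  exact (hp hx.1).resolve_left hx.2.2

theorem exists_mem_ne_of_subset_closure_range {X : Type*} [TopologicalSpace X] [T1Space X]
    {p : ℕ → X} {U : Set X} {x : X} [NeBot (𝓝[≠] x)] (hU : IsOpen U)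
    (hp : U ⊆ closure (Set.range p)) (hx : x ∈ U) : ∃ n, p n ∈ U ∧ p n ≠ x := by
  obtain ⟨y, hyU, hyx⟩ := (dense_compl_singleton x).inter_open_nonempty U hU ⟨x, hx⟩
  obtain ⟨_, ⟨hnU, hnx⟩, n, rfl⟩ :=
    mem_closure_iff.1 (hp hyU) _ (hU.sdiff isClosed_singleton) ⟨hyU, hyx⟩
  exact ⟨n, hnU, hnx⟩

theorem mapClusterPt_of_mem_closure_image_Ici {X : Type*} [TopologicalSpace X] {p : ℕ → X} {x : X}
    (hx : ∀ N, x ∈ closure (p '' Set.Ici N)) : MapClusterPt x atTop p := by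
  refine mapClusterPt_iff_frequently.2 fun s hs => frequently_atTop.2 fun N => ?_
  obtain ⟨_, hns, n, hn, rfl⟩ := mem_closure_iff_nhds.1 (hx N) s hs
  exact ⟨n, hn, hns⟩

theorem exists_extendsShifts_of_orbit {E : Type*} [NormedAddCommGroup E] [NormedSpace ℂ E]
    [ProperSpace E] {Ω B : Set E} {F : E → E} {p : ℕ → E} (hΩ : IsOpen Ω)
    (hsectors : HasInwardSectors Ω) (hF : DifferentiableOn ℂ F Ω) (hpΩ : ∀ n, p n ∈ Ω)
    (hFp : ∀ n, F (p n) = p (n + 1)) (hB : IsOpen B) (hdense : B ⊆ closure (Set.range p)) :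
    ∃ G : ℕ → E → E, (∀ n, DifferentiableOn ℂ (G n) B) ∧ ExtendsShifts G p p B := by
  have hstep : ∀ n, ∃ g : E → E, DifferentiableOn ℂ g B ∧ ∀ j, p j ∈ B → g (p j) = p (n + j) := by
    intro n
    induction n with
    | zero => exact ⟨id, differentiableOn_id, fun j _ => by rw [zero_add, id]⟩
    | succ n ih =>
      obtain ⟨g, hg, hgp⟩ := ih
      have horbit : B ∩ Set.range p ⊆ B ∩ g ⁻¹' Ω := by
        rintro _ ⟨hj, j, rfl⟩
        exact ⟨hj, by simpa only [Set.mem_preimage, hgp j hj] using hpΩ (n + j)⟩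
      have hgΩ : B ⊆ closure (B ∩ g ⁻¹' Ω) := fun x hx =>
        closure_mono horbit (hB.inter_closure ⟨hx, hdense hx⟩)
      obtain ⟨h, hh, hhF⟩ := exists_differentiableOn_eq_comp hΩ hsectors hF hB hg hgΩ
      refine ⟨h, hh, fun j hj => ?_⟩
      rw [hhF _ hj (by rw [hgp j hj]; exact hpΩ _), hgp j hj, hFp, add_right_comm]
  choose G hG hGp using hstep
  exact ⟨G, hG, hGp⟩

theorem uniformEquicontinuousOn_of_forall_norm_le {ι E F : Type*} [NormedAddCommGroup E]
    [NormedSpace ℂ E] [NormedAddCommGroup F] [NormedSpace ℂ F] {f : ι → E → F} {c : E} {R M : ℝ}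
    (hf : ∀ i, DifferentiableOn ℂ (f i) (ball c R)) (hM : ∀ i, ∀ x ∈ ball c R, ‖f i x‖ ≤ M) :
    UniformEquicontinuousOn f (ball c (R / 2)) :=
  LipschitzOnWith.uniformEquicontinuousOn f _ fun i => LipschitzOnWith.of_dist_le'
    fun _ hx _ hy => dist_le_of_forall_norm_le (hf i) (hM i) hx hy

end Orbit

section Recurrence

variable {E H : Type*} [NormedAddCommGroup E] [NormedSpace ℂ E] [NormedAddCommGroup H]
  [InnerProductSpace ℂ H] {p : ℕ → E} {ρ : ℝ}

-- At a time `n` which nearly maximizes `‖q n‖`, the map `G n` nearly attains its maximum norm at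
-- the centre, hence is nearly constant.
theorem ExtendsShifts.exists_forall_norm_sub_le {G : ℕ → E → H} {q : ℕ → H} {ε M : ℝ}
    (hGq : ExtendsShifts G p q (ball (p 0) ρ))
    (hG : ∀ n, DifferentiableOn ℂ (G n) (ball (p 0) ρ))
    (hdense : ball (p 0) ρ ⊆ closure (Set.range p)) (hρ : 0 < ρ) (hM : ∀ n, ‖q n‖ ≤ M)
    (hε : 0 < ε) :
    ∃ n, ∀ j, p j ∈ closedBall (p 0) (ρ / 2) → ‖q (n + j) - q n‖ ≤ ε := by
  have hbdd : BddAbove (Set.range fun n => ‖q n‖ ^ 2) :=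
    ⟨M ^ 2, by rintro _ ⟨n, rfl⟩; exact pow_le_pow_left₀ (norm_nonneg _) (hM n) 2⟩
  have hδ : 0 < ε ^ 2 / 3 := by positivity
  obtain ⟨n, hn⟩ := exists_lt_of_lt_ciSup (sub_lt_self (⨆ n, ‖q n‖ ^ 2) hδ)
  have hcentre : G n (p 0) = q n := hGq n 0 (mem_ball_self hρ)
  have hmax : Set.MapsTo (fun x => ‖G n x‖ ^ 2) (ball (p 0) ρ)
      (Set.Iic (‖G n (p 0)‖ ^ 2 + ε ^ 2 / 3)) := by
    refine mapsTo_of_subset_closure isOpen_ball hdense ((hG n).continuousOn.norm.pow 2)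
      isClosed_Iic ?_
    rintro _ ⟨hj, j, rfl⟩
    simp only [Set.mem_Iic, hcentre, hGq n j hj]
    linarith [le_ciSup hbdd (n + j)]
  refine ⟨n, fun j hj => ?_⟩
  have hsq := norm_sub_sq_le_of_forall_norm_sq_le hδ hρ (hG n) hmax hj
  rw [hcentre, hGq n j (closedBall_subset_ball (half_lt_self hρ) hj),
    mul_div_cancel₀ _ three_ne_zero] at hsq
  exact (sq_le_sq₀ (norm_nonneg _) hε.le).1 hsq

theorem ExtendsShifts.exists_forall_le_norm_sub_le {G : ℕ → E → H} {q : ℕ → H} {ε M : ℝ}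
    (hGq : ExtendsShifts G p q (ball (p 0) ρ))
    (hG : ∀ n, DifferentiableOn ℂ (G n) (ball (p 0) ρ))
    (hdense : ball (p 0) ρ ⊆ closure (Set.range p)) (hρ : 0 < ρ) (hM : ∀ n, ‖q n‖ ≤ M)
    (hε : 0 < ε) (L : ℕ) :
    ∃ n, ∀ j, p j ∈ closedBall (p 0) (ρ / 2) → ∀ l ≤ L, ‖q (n + l + j) - q (n + l)‖ ≤ ε := by
  set window : ℕ → PiLp 2 fun _ : Fin (L + 1) => H := fun n => WithLp.toLp 2 fun l => q (n + l)
  have hwindow : ExtendsShifts (fun n x => WithLp.toLp 2 fun l : Fin (L + 1) => G (n + l) x)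
      p window (ball (p 0) ρ) := fun n j hj => by
    refine congrArg (WithLp.toLp 2) (funext fun l => ?_)
    rw [hGq _ j hj, add_right_comm]
  have hbound : ∀ n, ‖window n‖ ≤ √(∑ _l : Fin (L + 1), M ^ 2) := fun n => by
    rw [PiLp.norm_eq_of_L2]
    gcongr
    exact hM _
  obtain ⟨n, hn⟩ := hwindow.exists_forall_norm_sub_le
    (fun n => (differentiableOn_piLp 2).2 fun l => hG (n + l)) hdense hρ hbound hε
  refine ⟨n, fun j hj l hl => ?_⟩
  have hl' := (PiLp.norm_apply_le _ (⟨l, by omega⟩ : Fin (L + 1))).trans (hn j hj)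
  rwa [add_right_comm]

end Recurrence

theorem ExtendsShifts.not_ball_subset_closure_range {E : Type*} [NormedAddCommGroup E]
    [InnerProductSpace ℂ E] [ProperSpace E] [Nontrivial E] {G : ℕ → E → E} {p : ℕ → E} {ρ M : ℝ}
    (hGp : ExtendsShifts G p p (ball (p 0) ρ))
    (hG : ∀ n, DifferentiableOn ℂ (G n) (ball (p 0) ρ)) (hρ : 0 < ρ) (hM : ∀ n, ‖p n‖ ≤ M) :
    ¬ ball (p 0) ρ ⊆ closure (Set.range p) := by
  intro hdense
  have hpunctured : ∀ x : E, (𝓝[≠] x).NeBot := Module.punctured_nhds_neBot ℂ E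
  have hGM : ∀ n, ∀ x ∈ ball (p 0) ρ, ‖G n x‖ ≤ M := fun n => by
    refine mapsTo_of_subset_closure (C := Set.Iic M) isOpen_ball hdense (hG n).continuousOn.norm
      isClosed_Iic ?_
    rintro _ ⟨hj, j, rfl⟩
    simpa only [Set.mem_Iic, hGp n j hj] using hM (n + j)
  have hrec : MapClusterPt (p 0) atTop p := mapClusterPt_of_mem_closure_image_Ici fun N =>
    subset_closure_image_Ici isOpen_ball hdense N (mem_ball_self hρ)
  have hhalf : ball (p 0) (ρ / 2) ⊆ ball (p 0) ρ := ball_subset_ball (half_le_self hρ.le)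
  obtain ⟨j, hjball, hj⟩ := exists_mem_ne_of_subset_closure_range isOpen_ball
    (hhalf.trans hdense) (mem_ball_self (half_pos hρ))
  have hε : 0 < dist (p j) (p 0) / 4 := by have := dist_pos.2 hj; positivity
  obtain ⟨L, hL⟩ := ExtendsShifts.exists_forall_exists_isAlmostPeriod
    (fun n i hi => hGp n i (hhalf hi)) (uniformEquicontinuousOn_of_forall_norm_le hG hGM)
    (ball_mem_nhds _ (half_pos hρ))
    ((isCompact_closedBall _ _).totallyBounded.subset ball_subset_closedBall) hrec hε
  obtain ⟨n, hn⟩ := hGp.exists_forall_le_norm_sub_le hG hdense hρ hM hε L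
  obtain ⟨l, hl, hperiod⟩ := hL n
  have hshift := hn j (ball_subset_closedBall hjball) l hl
  rw [← dist_eq_norm] at hshift
  have htriangle := dist_triangle4 (p j) (p (n + l + j)) (p (n + l)) (p 0)
  have hfirst := hperiod j
  have hlast := hperiod 0
  rw [dist_comm] at hfirst
  rw [add_zero] at hlast
  linarith

theorem no_dense_orbit_of_lipschitz_boundary_general {E : Type*} [NormedAddCommGroup E]
    [InnerProductSpace ℂ E] [FiniteDimensional ℂ E] [Nontrivial E] {Ω V : Set E}
    (hΩopen : IsOpen Ω) (hΩbdd : Bornology.IsBounded Ω) (hΩ : HasInwardSectors Ω) {F : E → E}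
    (hF : DifferentiableOn ℂ F Ω) (hVopen : IsOpen V) (hVne : V.Nonempty) :
    ¬ ∃ p : ℕ → E, (∀ n, p n ∈ Ω) ∧ (∀ n, F (p n) = p (n + 1)) ∧
      V ⊆ closure (Set.range p ∩ V) := by
  rintro ⟨p, hpΩ, hFp, hdense⟩
  have := FiniteDimensional.proper ℂ E
  have hpunctured : ∀ x : E, (𝓝[≠] x).NeBot := Module.punctured_nhds_neBot ℂ E
  obtain ⟨_, ⟨N, rfl⟩, hNV⟩ := closure_nonempty_iff.1 (hVne.mono hdense)
  obtain ⟨ρ, hρ, hball⟩ := Metric.isOpen_iff.1 hVopen _ hNV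
  obtain ⟨M, hM⟩ := hΩbdd.exists_norm_le
  set q : ℕ → E := fun n => p (N + n)
  have hdenseq : ball (q 0) ρ ⊆ closure (Set.range q) := by
    have hrange : p '' Set.Ici N ⊆ Set.range q := by
      rintro _ ⟨n, hn, rfl⟩
      exact ⟨n - N, congrArg p (Nat.add_sub_cancel' hn)⟩
    exact hball.trans <| (subset_closure_image_Ici hVopen
      (hdense.trans (closure_mono Set.inter_subset_left)) N).trans (closure_mono hrange)
  obtain ⟨G, hG, hGq⟩ := exists_extendsShifts_of_orbit hΩopen hΩ hF (fun n => hpΩ (N + n))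
    (fun n => hFp (N + n)) isOpen_ball hdenseq
  exact hGq.not_ball_subset_closure_range hG hρ (fun n => hM _ (hpΩ _)) hdenseq

/-- **Main Theorem.** A holomorphic map on a bounded domain with Lipschitz boundary has no
orbit whose intersection with a given nonempty open subset `V ⊆ Ω` is dense in `V`. -/
theorem no_dense_orbit_of_lipschitz_boundary {m : ℕ} (hm : 0 < m)
    (Ω V : Set (EuclideanSpace ℂ (Fin m)))
    (hΩopen : IsOpen Ω) (hΩconn : IsConnected Ω) (hΩbdd : Bornology.IsBounded Ω)
    (hΩlip : HasLipschitzBoundary Ω)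
    (F : EuclideanSpace ℂ (Fin m) → EuclideanSpace ℂ (Fin m))
    (hF : DifferentiableOn ℂ F Ω)
    (hVopen : IsOpen V) (hVne : V.Nonempty) (hVΩ : V ⊆ Ω) :
    ¬ ∃ p : ℕ → EuclideanSpace ℂ (Fin m),
        (∀ n, p n ∈ Ω) ∧ (∀ n, F (p n) = p (n + 1)) ∧
        V ⊆ closure (Set.range p ∩ V) := by
  have : Nonempty (Fin m) := ⟨⟨0, hm⟩⟩
  exact no_dense_orbit_of_lipschitz_boundary_general hΩopen hΩbdd hΩlip.hasInwardSectors hF hVopen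
    hVne
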